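/- Let ρ₀ satisfy the stated first-order equation with limits a and b at ∓∞, and fix α with 0 < α < min{√2(b² − a²)a, √2(b² − a²)b}. Then there exists C > 0 such that 0 < b² − ρ₀(z)² ≤ C e^{−αz} for all z ≥ 0 and 0 < ρ₀(z)² − a² ≤ C e^{αz} for all z ≤ 0; moreover, for every integer l ≥ 1 there exists C_l > 0 such that the l-th derivative satisfies |ρ₀^{(l)}(z)| ≤ C_l e^{−α|z|} for all z ∈ ℝ. -/

import Mathlib

open Filter

theorem decay_aux (α R : ℝ) (hR : α < R) (u r : ℝ → ℝ) (hu : ∀ z, 0 < u z)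
    (hd : ∀ z, HasDerivAt u (-(r z * u z)) z) (hr : Tendsto r atTop (nhds R)) :
    ∃ C > 0, ∀ z : ℝ, 0 ≤ z → u z ≤ C * Real.exp (-α * z) := by
  obtain ⟨Z, hZ⟩ := eventually_atTop.1 (hr.eventually (lt_mem_nhds hR))
  have hg : ∀ z, HasDerivAt (fun z => u z * Real.exp (α * z))
      (-(r z * u z) * Real.exp (α * z) + u z * (Real.exp (α * z) * (α * 1))) z := fun z =>
    (hd z).mul (((hasDerivAt_id z).const_mul α).exp)
  have hcont : Continuous (fun z => u z * Real.exp (α * z)) :=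
    continuous_iff_continuousAt.2 fun z => (hg z).continuousAt
  have hanti : AntitoneOn (fun z => u z * Real.exp (α * z)) (Set.Ici Z) := by
    apply antitoneOn_of_deriv_nonpos (convex_Ici Z) hcont.continuousOn
    · exact fun z _ => (hg z).differentiableAt.differentiableWithinAt
    · intro z hz
      rw [interior_Ici] at hz
      rw [(hg z).deriv]
      have h1 := hZ z (le_of_lt hz)
      have h2 : 0 < u z * Real.exp (α * z) := mul_pos (hu z) (Real.exp_pos _)
      nlinarith
  obtain ⟨M, hM⟩ := (isCompact_Icc (a := (0:ℝ)) (b := max 0 Z)).bddAbove_image hcont.continuousOn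
  have hM' : ∀ z, 0 ≤ z → z ≤ max 0 Z → u z * Real.exp (α * z) ≤ M := fun z h1 h2 =>
    hM ⟨z, ⟨h1, h2⟩, rfl⟩
  have hM0 : 0 < M := lt_of_lt_of_le (mul_pos (hu 0) (Real.exp_pos _)) (hM' 0 le_rfl (le_max_left _ _))
  refine ⟨M, hM0, fun z hz => ?_⟩
  have key : u z * Real.exp (α * z) ≤ M := by
    rcases le_total z (max 0 Z) with h | h
    · exact hM' z hz h
    · exact (hanti (Set.mem_Ici.2 (le_max_right 0 Z))
        (Set.mem_Ici.2 ((le_max_right 0 Z).trans h)) h).trans (hM' _ (le_max_left _ _) le_rfl)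
  have e : Real.exp (α * z) * Real.exp (-α * z) = 1 := by
    rw [← Real.exp_add]; simp
  calc u z = (u z * Real.exp (α * z)) * Real.exp (-α * z) := by rw [mul_assoc, e, mul_one]
    _ ≤ _ := by gcongr

theorem iter_aux (ρ : ℝ → ℝ) (F : Polynomial ℝ) (h : ∀ z, HasDerivAt ρ (F.eval (ρ z)) z) (n : ℕ) :
    ∃ Q : Polynomial ℝ, ∀ z, iteratedDeriv (n + 1) ρ z = Q.eval (ρ z) * F.eval (ρ z) := by
  induction n with
  | zero => exact ⟨1, fun z => by simp [iteratedDeriv_one, (h z).deriv]⟩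
  | succ n ih =>
    obtain ⟨Q, hQ⟩ := ih
    refine ⟨(Q * F).derivative, fun z => ?_⟩
    rw [iteratedDeriv_succ]
    have : iteratedDeriv (n + 1) ρ = fun z => (Q * F).eval (ρ z) := by
      ext z; rw [hQ, Polynomial.eval_mul]
    rw [this]
    exact (((Q * F).hasDerivAt (ρ z)).comp z (h z)).deriv

/-- Exponential decay estimates for the heteroclinic profile: with
`0 < α < min{√2(b² − a²)a, √2(b² − a²)b}`, there is `C > 0` with
`0 < b² − ρ₀(z)² ≤ C e^{−αz}` for `z ≥ 0` and `0 < ρ₀(z)² − a² ≤ C e^{αz}` for `z ≤ 0`;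
and for every `l ≥ 1` there is `C_l > 0` with `|ρ₀^{(l)}(z)| ≤ C_l e^{−α|z|}` on `ℝ`. -/
theorem statement7 (a b α : ℝ) (ha : 0 < a) (hab : a < b)
    (hα : 0 < α)
    (hα' : α < min (Real.sqrt 2 * (b ^ 2 - a ^ 2) * a) (Real.sqrt 2 * (b ^ 2 - a ^ 2) * b))
    (ρ₀ : ℝ → ℝ) (hreg : ContDiff ℝ 1 ρ₀)
    (hderiv : ∀ z, deriv ρ₀ z =
      Real.sqrt 2 / 2 * ((ρ₀ z) ^ 2 - a ^ 2) * (b ^ 2 - (ρ₀ z) ^ 2))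
    (hbnd : ∀ z, a < ρ₀ z ∧ ρ₀ z < b)
    (hbot : Tendsto ρ₀ atBot (nhds a))
    (htop : Tendsto ρ₀ atTop (nhds b)) :
    (∃ C > 0,
      (∀ z : ℝ, 0 ≤ z →
        0 < b ^ 2 - (ρ₀ z) ^ 2 ∧ b ^ 2 - (ρ₀ z) ^ 2 ≤ C * Real.exp (-α * z)) ∧
      (∀ z : ℝ, z ≤ 0 →
        0 < (ρ₀ z) ^ 2 - a ^ 2 ∧ (ρ₀ z) ^ 2 - a ^ 2 ≤ C * Real.exp (α * z))) ∧
    (∀ l : ℕ, 1 ≤ l → ∃ Cl > 0, ∀ z : ℝ,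
      |iteratedDeriv l ρ₀ z| ≤ Cl * Real.exp (-α * |z|)) := by
  have hb : 0 < b := ha.trans hab
  have h2 : 0 < Real.sqrt 2 := by positivity
  have hα1 := lt_of_lt_of_le hα' (min_le_left _ _)
  have hα2 := lt_of_lt_of_le hα' (min_le_right _ _)
  have hD : ∀ z, HasDerivAt ρ₀
      (Real.sqrt 2 / 2 * ((ρ₀ z) ^ 2 - a ^ 2) * (b ^ 2 - (ρ₀ z) ^ 2)) z := fun z => by
    rw [← hderiv]
    exact (hreg.differentiable (by norm_num) z).hasDerivAt
  have hu : ∀ z, 0 < b ^ 2 - (ρ₀ z) ^ 2 := fun z => by nlinarith [hbnd z]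
  have hv : ∀ z, 0 < (ρ₀ z) ^ 2 - a ^ 2 := fun z => by nlinarith [hbnd z]
  obtain ⟨C1, hC1, h1⟩ := decay_aux α _ hα2 (fun z => b ^ 2 - (ρ₀ z) ^ 2)
    (fun z => Real.sqrt 2 * ((ρ₀ z) ^ 2 - a ^ 2) * ρ₀ z) hu
    (fun z => by
      refine (((hD z).fun_pow 2).const_sub (b ^ 2)).congr_deriv ?_
      push_cast; ring)
    ((((htop.pow 2).sub_const _).const_mul _).mul htop)
  have hbot' : Tendsto (fun z => ρ₀ (-z)) atTop (nhds a) := hbot.comp tendsto_neg_atTop_atBot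
  obtain ⟨C2, hC2, h3⟩ := decay_aux α _ hα1 (fun z => (ρ₀ (-z)) ^ 2 - a ^ 2)
    (fun z => Real.sqrt 2 * (b ^ 2 - (ρ₀ (-z)) ^ 2) * ρ₀ (-z)) (fun z => hv (-z))
    (fun z => by
      have hh : HasDerivAt (fun z => ρ₀ (-z)) _ z := (hD (-z)).comp z (hasDerivAt_neg z)
      refine ((hh.fun_pow 2).sub_const (a ^ 2)).congr_deriv ?_
      push_cast; ring)
    ((((hbot'.pow 2).const_sub _).const_mul _).mul hbot')
  have h4 : ∀ z, z ≤ 0 → (ρ₀ z) ^ 2 - a ^ 2 ≤ C2 * Real.exp (α * z) := fun z hz => by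
    have := h3 (-z) (by linarith)
    simpa using this
  refine ⟨⟨C1 + C2, by positivity, fun z hz => ⟨hu z, (h1 z hz).trans ?_⟩,
    fun z hz => ⟨hv z, (h4 z hz).trans ?_⟩⟩, ?_⟩
  · gcongr; linarith
  · gcongr; linarith
  intro l hl
  obtain ⟨n, rfl⟩ : ∃ n, l = n + 1 := ⟨l - 1, by omega⟩
  let F : Polynomial ℝ := Polynomial.C (Real.sqrt 2 / 2) *
    (Polynomial.X ^ 2 - Polynomial.C (a ^ 2)) * (Polynomial.C (b ^ 2) - Polynomial.X ^ 2)
  have hF : ∀ x, F.eval x = Real.sqrt 2 / 2 * (x ^ 2 - a ^ 2) * (b ^ 2 - x ^ 2) := fun x => by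
    simp only [F, Polynomial.eval_mul, Polynomial.eval_sub, Polynomial.eval_C, Polynomial.eval_pow,
      Polynomial.eval_X]
  obtain ⟨Q, hQ⟩ := iter_aux ρ₀ F (fun z => by rw [hF]; exact hD z) n
  obtain ⟨M, hM⟩ := (isCompact_Icc (a := a) (b := b)).exists_bound_of_continuousOn
    Q.continuous.continuousOn
  have hM' : ∀ z, |Q.eval (ρ₀ z)| ≤ |M| + 1 := fun z => by
    have := hM (ρ₀ z) ⟨(hbnd z).1.le, (hbnd z).2.le⟩
    rw [Real.norm_eq_abs] at this
    linarith [le_abs_self M]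
  have hK : 0 < b ^ 2 - a ^ 2 := by nlinarith
  refine ⟨(|M| + 1) * (Real.sqrt 2 / 2 * (b ^ 2 - a ^ 2) * (C1 + C2)), by positivity, fun z => ?_⟩
  rw [hQ, abs_mul, mul_assoc]
  refine mul_le_mul (hM' z) ?_ (abs_nonneg _) (by positivity)
  have hFp : 0 < F.eval (ρ₀ z) := by
    rw [hF]
    exact mul_pos (mul_pos (by positivity) (hv z)) (hu z)
  rw [abs_of_pos hFp, hF, mul_assoc, mul_assoc, mul_assoc]
  refine mul_le_mul_of_nonneg_left ?_ (by positivity)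
  have hE := Real.exp_pos (-α * |z|)
  rcases le_total 0 z with hz | hz
  · refine mul_le_mul (by linarith [hu z]) ?_ (hu z).le hK.le
    have := h1 z hz
    rw [abs_of_nonneg hz] at *
    nlinarith
  · rw [mul_comm (ρ₀ z ^ 2 - a ^ 2)]
    refine mul_le_mul (by linarith [hv z]) ?_ (hv z).le hK.le
    have := h4 z hz
    have e : -α * |z| = α * z := by rw [abs_of_nonpos hz]; ring
    rw [e] at hE ⊢
    nlinarith
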